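/- Fix ε > 0 and, for each n, set k_n = log₂ log₂ n. Let 𝒢_n be the set of all x^n ∈ 𝒳^n for which there exist an integer l with 1 ≤ l ≤ k_n, an l-length block code C_l with at most 2^{l(R+ε)} codewords, and an integer s with 0 ≤ s < l, such that Σ_{a^l ∈ 𝒳^l} q_{l;s}(a^l | x^n) · d̄_l^{(j)}(a^l, C_l) ≤ Δ_j + 4Jε for every j ∈ {1,…,J}. Then for every stationary ergodic source 𝑿 for which (R, Δ_𝒥) is achievable, there exists N such that for all n ≥ N, P_{X^n}(𝒢_n^∁) ≤ ε, where 𝒢_n^∁ = 𝒳^n \ 𝒢_n. (Lemma 1) -/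

import Mathlib

/-!
Fix one good code `C` of some length `l`. For a single decoder the ergodic theorem would give a
phase `s < l` at which running `C` on consecutive blocks does well, but `shift^[l]` need not be
ergodic, so different decoders may prefer different phases. Instead, superblocks of length
`l * (N * l + 1)` are cut into `l` rows of `N` blocks plus one spare letter each, which makes the
rows run through all phases modulo `l`, and `C` is applied to every block. By the mean ergodic
theorem the distortion of a superblock is then close in `L²` to the expected distortion of `C`,
for every decoder at once; the spare letters contribute a fraction `1 / (N * l + 1)` only. Averaging
over a measure-preserving map contracts `Lᵖ` norms, so this estimate, and Markov's inequality with
it, holds uniformly in the number of superblocks that fit into `x^n`.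
-/

open MeasureTheory Finset

/-- An `n`-length block code for the multiterminal system with one encoder and `J` decoders:
an encoder into a message set of size `M` and, for each `j`, a decoder using the `j`-th side
information. -/
structure BlockCode (J : ℕ) (𝒳 : Type) (𝒴 Zt : Fin J → Type) (n : ℕ) where
  M : ℕ
  M_pos : 0 < M
  enc : (Fin n → 𝒳) → Fin M
  dec : ∀ j : Fin J, Fin M → (Fin n → 𝒴 j) → (Fin n → Zt j)

section Defs

variable {J : ℕ} {𝒳 : Type} {𝒴 𝒵 Zt : Fin J → Type}
variable [Fintype 𝒳] [DecidableEq 𝒳]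
  [∀ j, Fintype (𝒴 j)] [∀ j, DecidableEq (𝒴 j)]
  [∀ j, Fintype (𝒵 j)] [∀ j, DecidableEq (𝒵 j)]
  [∀ j, Fintype (Zt j)]

/-- The memoryless `n`-th extension `W^n` of the transition probability `W`. -/
def Wn (W : 𝒳 → (∀ j, 𝒴 j) → (∀ j, 𝒵 j) → ℝ) {n : ℕ}
    (x : Fin n → 𝒳) (y : Fin n → ∀ j, 𝒴 j) (z : Fin n → ∀ j, 𝒵 j) : ℝ :=
  ∏ i, W (x i) (y i) (z i)

/-- The marginal `W_j^n` of `W^n` on the `j`-th side-information and target components. -/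
def Wjn (W : 𝒳 → (∀ j, 𝒴 j) → (∀ j, 𝒵 j) → ℝ) (j : Fin J) {n : ℕ}
    (x : Fin n → 𝒳) (yj : Fin n → 𝒴 j) (zj : Fin n → 𝒵 j) : ℝ :=
  ∑ y : Fin n → ∀ k, 𝒴 k, ∑ z : Fin n → ∀ k, 𝒵 k,
    if (∀ i, y i j = yj i ∧ z i j = zj i) then Wn W x y z else 0

/-- Per-block average distortion `d_n^{(j)}`. -/
noncomputable def dn (d1 : ∀ j, Zt j → 𝒵 j → ℝ) (j : Fin J) {n : ℕ}
    (zt : Fin n → Zt j) (z : Fin n → 𝒵 j) : ℝ :=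
  (∑ i, d1 j (zt i) (z i)) / n

/-- The conditional expected distortion `d̄_n^{(j)}(x^n, C_n)` given the source block `x^n`. -/
noncomputable def dbar (W : 𝒳 → (∀ j, 𝒴 j) → (∀ j, 𝒵 j) → ℝ)
    (d1 : ∀ j, Zt j → 𝒵 j → ℝ) {n : ℕ}
    (C : BlockCode J 𝒳 𝒴 Zt n) (j : Fin J) (x : Fin n → 𝒳) : ℝ :=
  ∑ yj : Fin n → 𝒴 j, ∑ zj : Fin n → 𝒵 j,
    Wjn W j x yj zj * dn d1 j (C.dec j (C.enc x) yj) zj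

variable [MeasurableSpace 𝒳]

/-- The expected distortion `E[d_n^{(j)}(ψ_n^{(j)}(φ_n(X^n), Y_j^n), Z_j^n)]` of a code, for the
source with law `μ` on `𝒳^ℕ`; `P_{X^n}(x^n)` is the measure of the corresponding cylinder set. -/
noncomputable def expDist (μ : Measure (ℕ → 𝒳))
    (W : 𝒳 → (∀ j, 𝒴 j) → (∀ j, 𝒵 j) → ℝ) (d1 : ∀ j, Zt j → 𝒵 j → ℝ) {n : ℕ}
    (C : BlockCode J 𝒳 𝒴 Zt n) (j : Fin J) : ℝ :=
  ∑ x : Fin n → 𝒳,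
    (μ {ω | ∀ i : Fin n, ω (i : ℕ) = x i}).toReal * dbar W d1 C j x

/-- `(R, Δ_𝒥)` is achievable for the source `μ`: for every `ε > 0` and all sufficiently large `n`
there is an `n`-length block code of rate at most `R + ε` whose expected distortion at every
decoder `j` is at most `Δ j + ε`. -/
def Achievable (μ : Measure (ℕ → 𝒳))
    (W : 𝒳 → (∀ j, 𝒴 j) → (∀ j, 𝒵 j) → ℝ) (d1 : ∀ j, Zt j → 𝒵 j → ℝ)
    (R : ℝ) (Δ : Fin J → ℝ) : Prop :=
  ∀ ε > (0 : ℝ), ∃ N : ℕ, ∀ n ≥ N, ∃ C : BlockCode J 𝒳 𝒴 Zt n,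
    Real.logb 2 C.M / n ≤ R + ε ∧ ∀ j, expDist μ W d1 C j ≤ Δ j + ε

end Defs

section Empirical

variable {𝒳 : Type} [Nonempty 𝒳] [DecidableEq 𝒳] [Fintype 𝒳]

/-- The length-`l` subblock of `x^n` starting at (0-based) position `start`,
i.e. `x_{start+1}^{start+l}` in 1-based notation (junk outside the range). -/
noncomputable def subblock {n : ℕ} (x : Fin n → 𝒳) (start l : ℕ) : Fin l → 𝒳 :=
  fun t => if h : start + (t : ℕ) < n then x ⟨start + t, h⟩ else Classical.arbitrary 𝒳

/-- The non-overlapping empirical distribution `q_{l;s}(a^l | x^n)`. -/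
noncomputable def qEmp {n : ℕ} (l s : ℕ) (x : Fin n → 𝒳) (a : Fin l → 𝒳) : ℝ :=
  (((Finset.range ((n - s) / l)).filter fun i => subblock x (i * l + s) l = a).card : ℝ) /
    (((n - s) / l : ℕ) : ℝ)

end Empirical

section Lemma1

variable {J : ℕ} {𝒳 : Type} {𝒴 𝒵 Zt : Fin J → Type}
variable [Fintype 𝒳] [DecidableEq 𝒳] [Nonempty 𝒳]
  [∀ j, Fintype (𝒴 j)] [∀ j, DecidableEq (𝒴 j)]
  [∀ j, Fintype (𝒵 j)] [∀ j, DecidableEq (𝒵 j)]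
  [∀ j, Fintype (Zt j)]

/-- The set `𝒢_n` of sequences `x^n`: there are `l` with `1 ≤ l ≤ k_n = log₂ log₂ n`, an
`l`-length block code with at most `2^{l(R+ε)}` codewords, and an offset `0 ≤ s < l` such that
`Σ_{a^l} q_{l;s}(a^l|x^n) d̄_l^{(j)}(a^l, C_l) ≤ Δ_j + 4Jε` for every `j`. -/
def GoodSet (W : 𝒳 → (∀ j, 𝒴 j) → (∀ j, 𝒵 j) → ℝ) (d1 : ∀ j, Zt j → 𝒵 j → ℝ)
    (R : ℝ) (Δ : Fin J → ℝ) (ε : ℝ) (n : ℕ) : Set (Fin n → 𝒳) :=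
  {x | ∃ l : ℕ, 1 ≤ l ∧ (l : ℝ) ≤ Real.logb 2 (Real.logb 2 n) ∧
    ∃ C : BlockCode J 𝒳 𝒴 Zt l, (C.M : ℝ) ≤ (2 : ℝ) ^ ((l : ℝ) * (R + ε)) ∧
    ∃ s < l, ∀ j, (∑ a : Fin l → 𝒳, qEmp l s x a * dbar W d1 C j a) ≤ Δ j + 4 * J * ε}

section PhaseAverage

variable {E : Type*} [AddCommGroup E] [Module ℝ E]

/-- The starting position of the block `p = (r, i)` when `l * N` disjoint blocks of length `l` are
placed in `{0, …, l * (N * l + 1) - 1}`. Row `r` consists of `N` consecutive blocks and one spare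
position, which makes it start at a position congruent to `r` modulo `l`: the `l` rows run
through all phases modulo `l`. -/
def phaseOffset (l N : ℕ) (p : Fin l × Fin N) : ℕ := l * p.2 + (N * l + 1) * p.1

/-- The average of a sequence `g` over the starting positions `phaseOffset l N`. -/
noncomputable def phaseAverage (l N : ℕ) (g : ℕ → E) : E :=
  ((l * N : ℕ) : ℝ)⁻¹ • ∑ p, g (phaseOffset l N p)

/-- The map `(p, t) ↦ phaseOffset l N p + t` onto the positions covered by the blocks `p`, assembled
from `finProdFinEquiv` so that its injectivity comes for free. -/
def phaseEmbedding (l N : ℕ) : (Fin l × Fin N) × Fin l ↪ Fin (l * (N * l + 1)) :=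
  (Equiv.prodAssoc _ _ _).toEmbedding.trans <|
    ((Function.Embedding.refl _).prodMap
      (finProdFinEquiv.toEmbedding.trans Fin.castSuccEmb)).trans finProdFinEquiv.toEmbedding

lemma phaseEmbedding_apply_val (l N : ℕ) (p : Fin l × Fin N) (t : Fin l) :
    (phaseEmbedding l N (p, t) : ℕ) = phaseOffset l N p + t := by
  change (t + l * p.2 + (N * l + 1) * p.1 : ℕ) = l * p.2 + (N * l + 1) * p.1 + t
  ring

end PhaseAverage

section MeanErgodic

open Filter Topology

variable {H : Type*} [NormedAddCommGroup H]

section Normed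

variable [NormedSpace ℝ H] {U : H →L[ℝ] H}

lemma norm_pow_apply_le (hU : ‖U‖ ≤ 1) (k : ℕ) (x : H) : ‖(U ^ k) x‖ ≤ ‖x‖ := by
  induction k generalizing x with
  | zero => simp
  | succ k ih =>
    rw [pow_succ]
    exact (ih (U x)).trans (by simpa using U.le_of_opNorm_le hU x)

lemma opNorm_pow_le_one (hU : ‖U‖ ≤ 1) (k : ℕ) : ‖U ^ k‖ ≤ 1 :=
  (U ^ k).opNorm_le_bound zero_le_one fun x => by simpa using norm_pow_apply_le hU k x

lemma pow_apply_eq_self {p : H} (hp : U p = p) (k : ℕ) : (U ^ k) p = p := by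
  rw [FunLike.coe_pow_eq_iterate]
  exact Function.iterate_fixed hp k

lemma tendsto_pow_apply_of_fixed (hU : ‖U‖ ≤ 1) {p : H} (hp : U p = p) {u : ℕ → H}
    (hu : Tendsto u atTop (𝓝 p)) (k : ℕ → ℕ) :
    Tendsto (fun n => (U ^ k n) (u n)) atTop (𝓝 p) := by
  rw [tendsto_iff_norm_sub_tendsto_zero] at hu ⊢
  refine squeeze_zero (fun _ => norm_nonneg _) (fun n => ?_) hu
  calc ‖(U ^ k n) (u n) - p‖ = ‖(U ^ k n) (u n - p)‖ := by rw [map_sub, pow_apply_eq_self hp]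
    _ ≤ ‖u n - p‖ := norm_pow_apply_le hU _ _

lemma average_pow_eq_average_birkhoffAverage (U : H →L[ℝ] H) (f : H) {l : ℕ} (N : ℕ)
    (k : Fin l → ℕ) :
    ((l * N : ℕ) : ℝ)⁻¹ • ∑ p : Fin l × Fin N, (U ^ (p.1 + l * (k p.1 + p.2))) f =
      (l : ℝ)⁻¹ • ∑ r : Fin l, (U ^ (r : ℕ))
        (((U ^ l) ^ k r) (birkhoffAverage ℝ (U ^ l) _root_.id N f)) := by
  rw [Nat.cast_mul, mul_inv, mul_smul, Fintype.sum_prod_type, smul_sum]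
  congr 1
  refine sum_congr rfl fun r _ => ?_
  simp only [birkhoffAverage, birkhoffSum, map_smul, map_sum, _root_.id,
    ← FunLike.coe_pow_eq_iterate, ← mul_apply_eq_comp, ← pow_mul, ← pow_add]
  rw [← Fin.sum_univ_eq_sum_range fun i => (U ^ ((r : ℕ) + (l * k r + l * i))) f]
  simp only [mul_add]

lemma birkhoffAverage_mul_eq_average_pow (U : H →L[ℝ] H) (f : H) (l N : ℕ) :
    birkhoffAverage ℝ U _root_.id (l * N) f =
      ((l * N : ℕ) : ℝ)⁻¹ • ∑ p : Fin l × Fin N, (U ^ (p.1 + l * (0 + p.2) : ℕ)) f := by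
  rw [birkhoffAverage, birkhoffSum, mul_comm l N, ← Fin.sum_univ_eq_sum_range
    (fun m => _root_.id (U^[m] f)), ← finProdFinEquiv.sum_comp, ← (Equiv.prodComm _ _).sum_comp]
  simp

end Normed

variable [InnerProductSpace ℝ H] [CompleteSpace H] {U : H →L[ℝ] H}

lemma tendsto_average_pow (hU : ‖U‖ ≤ 1) (f : H) (l : ℕ) (k : Fin l → ℕ → ℕ) :
    Tendsto (fun N : ℕ =>
        ((l * N : ℕ) : ℝ)⁻¹ • ∑ p : Fin l × Fin N, (U ^ (p.1 + l * (k p.1 N + p.2))) f)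
      atTop (𝓝 ((l : ℝ)⁻¹ • ∑ r : Fin l, (U ^ (r : ℕ))
        (((U ^ l).eqLocus (1 : H →L[ℝ] H)).orthogonalProjectionOnto f : H))) := by
  have hV : ‖U ^ l‖ ≤ 1 := opNorm_pow_le_one hU l
  have hfixed : (U ^ l) (((U ^ l).eqLocus (1 : H →L[ℝ] H)).orthogonalProjectionOnto f : H) =
      ((U ^ l).eqLocus (1 : H →L[ℝ] H)).orthogonalProjectionOnto f :=
    (((U ^ l).eqLocus (1 : H →L[ℝ] H)).orthogonalProjectionOnto f).2
  simp only [fun N => average_pow_eq_average_birkhoffAverage U f N fun r => k r N]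
  refine (tendsto_finsetSum _ fun r _ => ?_).const_smul _
  exact ((U ^ (r : ℕ)).continuous.tendsto _).comp <| tendsto_pow_apply_of_fixed hV hfixed
    ((U ^ l).tendsto_birkhoffAverage_orthogonalProjection hV f) (k r)

theorem tendsto_phaseAverage_orthogonalProjection (hU : ‖U‖ ≤ 1) (f : H) {l : ℕ} (hl : l ≠ 0) :
    Tendsto (fun N => phaseAverage l N fun m => (U ^ m) f) atTop
      (𝓝 ((U.eqLocus (1 : H →L[ℝ] H)).orthogonalProjectionOnto f : H)) := by
  -- The limit in `tendsto_average_pow` does not depend on `k`, and `k = 0` gives Birkhoff averages.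
  have hlim : ((U.eqLocus (1 : H →L[ℝ] H)).orthogonalProjectionOnto f : H) = (l : ℝ)⁻¹ •
      ∑ r : Fin l, (U ^ (r : ℕ))
        (((U ^ l).eqLocus (1 : H →L[ℝ] H)).orthogonalProjectionOnto f : H) := by
    refine tendsto_nhds_unique ((U.tendsto_birkhoffAverage_orthogonalProjection hU f).comp
      (tendsto_id.const_mul_atTop' (Nat.pos_of_ne_zero hl))) ?_
    simpa only [Function.comp_def, _root_.id, birkhoffAverage_mul_eq_average_pow] using
      tendsto_average_pow hU f l fun _ _ => 0
  rw [hlim]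
  refine (tendsto_average_pow hU f l fun r N => N * r).congr fun N => ?_
  refine congrArg _ (sum_congr rfl fun p _ => congrArg (fun m => (U ^ m) f) ?_)
  rw [phaseOffset]
  ring

end MeanErgodic

section BirkhoffAverage

variable {α : Type*} (S : α → α) {f g : α → ℝ} {n : ℕ}

lemma birkhoffAverage_sub_const (f : α → ℝ) (c : ℝ) (hn : n ≠ 0) (x : α) :
    birkhoffAverage ℝ S (fun x => f x - c) n x = birkhoffAverage ℝ S f n x - c := by
  have hconst : birkhoffAverage ℝ S (fun _ => c) n = fun _ => c :=
    birkhoffAverage_of_comp_eq ℝ rfl (Nat.cast_ne_zero.2 hn)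
  change birkhoffAverage ℝ S (f - fun _ => c) n x = _
  rw [birkhoffAverage_sub, Pi.sub_apply, Pi.sub_apply, hconst]

lemma birkhoffAverage_le_add_const {c : ℝ} (h : ∀ x, f x ≤ g x + c) (hn : n ≠ 0) (x : α) :
    birkhoffAverage ℝ S f n x ≤ birkhoffAverage ℝ S g n x + c := by
  rw [← sub_le_iff_le_add, ← birkhoffAverage_sub_const S f c hn]
  exact mul_le_mul_of_nonneg_left (sum_le_sum fun k _ => sub_le_iff_le_add.2 (h _)) (by positivity)

end BirkhoffAverage

section Ergodic

open Filter Topology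
open scoped ENNReal

variable {Ω : Type*} [MeasurableSpace Ω] {μ : Measure Ω} {T : Ω → Ω} {f : Ω → ℝ}

/-- The Koopman operator `g ↦ g ∘ T` of a measure-preserving map `T`, acting on `L²(μ)`. -/
noncomputable def koopman (hT : MeasurePreserving T μ μ) : Lp ℝ 2 μ →L[ℝ] Lp ℝ 2 μ :=
  (Lp.compMeasurePreservingₗᵢ ℝ T hT).toContinuousLinearMap

lemma norm_koopman_le_one (hT : MeasurePreserving T μ μ) : ‖koopman hT‖ ≤ 1 :=
  LinearIsometry.norm_toContinuousLinearMap_le _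

lemma coeFn_koopman (hT : MeasurePreserving T μ μ) (g : Lp ℝ 2 μ) : koopman hT g =ᵐ[μ] g ∘ T :=
  Lp.coeFn_compMeasurePreserving g hT

lemma coeFn_koopman_pow_toLp (hT : MeasurePreserving T μ μ) (hf : MemLp f 2 μ) (k : ℕ) :
    (koopman hT ^ k) (hf.toLp f) =ᵐ[μ] f ∘ T^[k] := by
  have : (koopman hT ^ k) (hf.toLp f) =
      Lp.compMeasurePreserving T^[k] (hT.iterate k) (hf.toLp f) := by
    rw [← Lp.compMeasurePreserving_iterate, FunLike.coe_pow_eq_iterate]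
    rfl
  rw [this, Lp.toLp_compMeasurePreserving]
  exact MemLp.coeFn_toLp _

lemma coeFn_phaseAverage_koopman_pow (hT : MeasurePreserving T μ μ) (hf : MemLp f 2 μ)
    (l N : ℕ) :
    ((phaseAverage l N fun m => (koopman hT ^ m) (hf.toLp f) : Lp ℝ 2 μ) : Ω → ℝ) =ᵐ[μ]
      fun ω => phaseAverage l N fun m => f (T^[m] ω) := by
  filter_upwards [Lp.coeFn_smul ((l * N : ℕ) : ℝ)⁻¹
      (∑ p, (koopman hT ^ phaseOffset l N p) (hf.toLp f)),
    Lp.coeFn_fun_finsetSum univ fun p => (koopman hT ^ phaseOffset l N p) (hf.toLp f),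
    ae_all_iff.2 (coeFn_koopman_pow_toLp hT hf)] with ω hsmul hsum hpow
  rw [phaseAverage, hsmul, Pi.smul_apply, hsum]
  simp only [hpow, phaseAverage, Function.comp_apply]

variable [IsProbabilityMeasure μ]

lemma orthogonalProjection_koopman_eq_const (hT : Ergodic T μ) (hf : MemLp f 2 μ) :
    (((koopman hT.toMeasurePreserving).eqLocus
        (1 : Lp ℝ 2 μ →L[ℝ] Lp ℝ 2 μ)).orthogonalProjectionOnto (hf.toLp f) : Lp ℝ 2 μ) =
      (memLp_const (∫ ω, f ω ∂μ)).toLp _ := by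
  rw [← Submodule.starProjection_apply]
  refine Submodule.eq_starProjection_of_mem_of_inner_eq_zero ?_ fun g hg => ?_
  · change koopman _ _ = _
    exact (Lp.toLp_compMeasurePreserving _ _).trans rfl
  · have hginv : g ∘ T =ᵐ[μ] g := by
      have := coeFn_koopman hT.toMeasurePreserving g
      rw [show koopman hT.toMeasurePreserving g = g from hg] at this
      exact this.symm
    obtain ⟨c, hc⟩ := hT.ae_eq_const_of_ae_eq_comp_ae (Lp.aestronglyMeasurable g) hginv
    have hinner : (fun ω => inner ℝ ((hf.toLp f - (memLp_const (∫ ω, f ω ∂μ)).toLp _ :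
        Lp ℝ 2 μ) ω) (g ω)) =ᵐ[μ] fun ω => (f ω - ∫ ω, f ω ∂μ) * c := by
      rw [← MemLp.toLp_sub]
      filter_upwards [hc, (hf.sub (memLp_const (∫ ω, f ω ∂μ))).coeFn_toLp] with ω hgω hfω
      rw [hgω, hfω]
      simp [mul_comm]
    rw [L2.inner_def, integral_congr_ae hinner, integral_mul_const,
      integral_sub (hf.integrable one_le_two) (integrable_const _)]
    simp

theorem tendsto_eLpNorm_phaseAverage_sub_integral (hT : Ergodic T μ) (hf : MemLp f 2 μ) {l : ℕ}
    (hl : l ≠ 0) :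
    Tendsto (fun N => eLpNorm (fun ω => phaseAverage l N (fun m => f (T^[m] ω)) - ∫ ω, f ω ∂μ) 2 μ)
      atTop (𝓝 0) := by
  have hlim := tendsto_phaseAverage_orthogonalProjection
    (norm_koopman_le_one hT.toMeasurePreserving) (hf.toLp f) hl
  rw [orthogonalProjection_koopman_eq_const hT, Lp.tendsto_Lp_iff_tendsto_eLpNorm] at hlim
  refine hlim.congr fun N => eLpNorm_congr_ae ?_
  exact (coeFn_phaseAverage_koopman_pow hT.toMeasurePreserving hf l N).sub EventuallyEq.rfl

omit [IsProbabilityMeasure μ] in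
lemma aestronglyMeasurable_sum_comp_iterate {ι : Type*} {S : Ω → Ω}
    (hS : MeasurePreserving S μ μ) (hf : AEStronglyMeasurable f μ) (s : Finset ι) (k : ι → ℕ) :
    AEStronglyMeasurable (fun ω => ∑ i ∈ s, f (S^[k i] ω)) μ :=
  Finset.aestronglyMeasurable_fun_sum s fun i _ => hf.comp_measurePreserving (hS.iterate (k i))

omit [IsProbabilityMeasure μ] in
lemma eLpNorm_birkhoffAverage_le {S : Ω → Ω} (hS : MeasurePreserving S μ μ)
    (hf : AEStronglyMeasurable f μ) {p : ℝ≥0∞} (hp : 1 ≤ p) (n : ℕ) :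
    eLpNorm (birkhoffAverage ℝ S f n) p μ ≤ eLpNorm f p μ := by
  have hsum : eLpNorm (∑ k ∈ range n, f ∘ S^[k]) p μ ≤ n * eLpNorm f p μ := by
    calc eLpNorm (∑ k ∈ range n, f ∘ S^[k]) p μ
        ≤ ∑ k ∈ range n, eLpNorm (f ∘ S^[k]) p μ :=
          eLpNorm_sum_le (fun k _ => hf.comp_measurePreserving (hS.iterate k)) hp
      _ = n * eLpNorm f p μ := by
          simp [eLpNorm_comp_measurePreserving hf (hS.iterate _)]
  have hsmul : birkhoffAverage ℝ S f n = (n : ℝ)⁻¹ • ∑ k ∈ range n, f ∘ S^[k] := by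
    ext ω
    simp [birkhoffAverage, birkhoffSum]
  rw [hsmul, eLpNorm_const_smul]
  obtain rfl | hn := eq_or_ne n 0
  · simp
  calc ‖(n : ℝ)⁻¹‖ₑ * eLpNorm (∑ k ∈ range n, f ∘ S^[k]) p μ
      ≤ (n : ℝ≥0∞)⁻¹ * (n * eLpNorm f p μ) := by
        rw [enorm_inv (by positivity)]
        simpa using mul_le_mul_right hsum _
    _ = eLpNorm f p μ := by
        rw [← mul_assoc, ENNReal.inv_mul_cancel (by simpa) (by simp), one_mul]

lemma measure_const_add_le_birkhoffAverage_le {S : Ω → Ω} (hS : MeasurePreserving S μ μ)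
    (hf : AEStronglyMeasurable f μ) (c : ℝ) {η : ℝ} (hη : 0 < η) {n : ℕ} (hn : n ≠ 0) :
    μ {ω | c + η ≤ birkhoffAverage ℝ S f n ω} ≤
      eLpNorm (fun ω => f ω - c) 2 μ / ENNReal.ofReal η := by
  have hfc : AEStronglyMeasurable (fun ω => f ω - c) μ := hf.sub aestronglyMeasurable_const
  have hA : AEStronglyMeasurable (birkhoffAverage ℝ S (fun ω => f ω - c) n) μ :=
    (aestronglyMeasurable_sum_comp_iterate hS hfc (range n) _root_.id).const_smul (n : ℝ)⁻¹
  calc μ {ω | c + η ≤ birkhoffAverage ℝ S f n ω}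
      ≤ μ {ω | ENNReal.ofReal η ≤ ‖birkhoffAverage ℝ S (fun ω => f ω - c) n ω‖ₑ} := by
        refine measure_mono fun ω (hω : c + η ≤ _) => ?_
        change _ ≤ ‖_‖ₑ
        rw [birkhoffAverage_sub_const S f c hn, Real.enorm_eq_ofReal_abs]
        exact ENNReal.ofReal_le_ofReal ((le_sub_iff_add_le'.2 hω).trans (le_abs_self _))
    _ ≤ eLpNorm (birkhoffAverage ℝ S (fun ω => f ω - c) n) 1 μ / ENNReal.ofReal η := by
        rw [eLpNorm_one_eq_lintegral_enorm]
        exact meas_ge_le_lintegral_div hA.enorm (by simpa) ENNReal.ofReal_ne_top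
    _ ≤ eLpNorm (fun ω => f ω - c) 2 μ / ENNReal.ofReal η := by
        gcongr
        exact (eLpNorm_birkhoffAverage_le hS hfc le_rfl n).trans
          (eLpNorm_le_eLpNorm_of_exponent_le one_le_two hfc)

theorem eventually_measure_integral_add_le_birkhoffAverage_phaseAverage_le (hT : Ergodic T μ)
    (hf : MemLp f 2 μ) {l : ℕ} (hl : l ≠ 0) {η : ℝ} (hη : 0 < η) {δ : ℝ≥0∞} (hδ : δ ≠ 0) :
    ∀ᶠ N in atTop, ∀ S : Ω → Ω, MeasurePreserving S μ μ → ∀ n ≠ 0,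
      μ {ω | ∫ ω, f ω ∂μ + η ≤
        birkhoffAverage ℝ S (fun ω => phaseAverage l N fun m => f (T^[m] ω)) n ω} ≤ δ := by
  have hpos : 0 < δ * ENNReal.ofReal η := by
    simpa [pos_iff_ne_zero] using ⟨hδ, hη⟩
  filter_upwards [(tendsto_eLpNorm_phaseAverage_sub_integral hT hf hl).eventually_le_const hpos]
    with N hN S hS n hn
  have hmeas : AEStronglyMeasurable (fun ω => phaseAverage l N fun m => f (T^[m] ω)) μ :=
    (aestronglyMeasurable_sum_comp_iterate hT.toMeasurePreserving hf.aestronglyMeasurable univ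
      (phaseOffset l N)).const_smul ((l * N : ℕ) : ℝ)⁻¹
  exact (measure_const_add_le_birkhoffAverage_le hS hmeas _ hη hn).trans
    (ENNReal.div_le_of_le_mul hN)

end Ergodic

section Marginal

variable {ι κ κ' P R : Type*} [Fintype ι] [DecidableEq ι] [Fintype κ] [DecidableEq κ]
  [Fintype κ'] [DecidableEq κ'] [Fintype P] [CommSemiring R]

lemma sum_prod_mul_comp_inl {w : κ ⊕ κ' → P → R} (hw : ∀ i, ∑ p, w (.inr i) p = 1)
    (g : (κ → P) → R) :
    ∑ p : κ ⊕ κ' → P, (∏ i, w i (p i)) * g (p ∘ Sum.inl) =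
      ∑ q : κ → P, (∏ k, w (.inl k) (q k)) * g q := by
  have hrest : ∑ r : κ' → P, ∏ i, w (.inr i) (r i) = 1 := by
    rw [← Fintype.prod_sum fun i => w (.inr i)]
    exact prod_eq_one fun i _ => hw i
  calc ∑ p : κ ⊕ κ' → P, (∏ i, w i (p i)) * g (p ∘ Sum.inl)
      = ∑ q : (κ → P) × (κ' → P),
          ((∏ k, w (.inl k) (q.1 k)) * ∏ i, w (.inr i) (q.2 i)) * g q.1 := by
        refine Fintype.sum_equiv (Equiv.sumArrowEquivProdArrow _ _ _) _ _ fun p => ?_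
        rw [Fintype.prod_sum_type]
        rfl
    _ = ∑ q : κ → P, (∏ k, w (.inl k) (q k)) * g q := by
        simp only [Fintype.sum_prod_type, mul_right_comm _ (∏ _, _), ← mul_sum, hrest, mul_one]

lemma sum_prod_mul_comp_embedding (e : κ ↪ ι) {w : ι → P → R}
    (hw : ∀ i ∉ Set.range e, ∑ p, w i p = 1) (g : (κ → P) → R) :
    ∑ p : ι → P, (∏ i, w i (p i)) * g (p ∘ e) =
      ∑ q : κ → P, (∏ k, w (e k) (q k)) * g q := by
  classical
  let σ : κ ⊕ ((Set.range e)ᶜ : Set ι) ≃ ι :=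
    ((Equiv.ofInjective e e.injective).sumCongr (Equiv.refl _)).trans
      (Equiv.Set.sumCompl (Set.range e))
  calc ∑ p : ι → P, (∏ i, w i (p i)) * g (p ∘ e)
      = ∑ p : κ ⊕ ((Set.range e)ᶜ : Set ι) → P, (∏ a, w (σ a) (p a)) * g (p ∘ Sum.inl) := by
        refine Fintype.sum_equiv (σ.symm.arrowCongr (Equiv.refl P)) _ _ fun p => ?_
        rw [← σ.prod_comp]
        rfl
    _ = ∑ q : κ → P, (∏ k, w (e k) (q k)) * g q :=
        sum_prod_mul_comp_inl (w := fun a => w (σ a)) (fun i => hw i i.2) g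

end Marginal

section Code

omit [Fintype 𝒳] [DecidableEq 𝒳] [Nonempty 𝒳] [∀ j, Fintype (Zt j)]

variable {n l L : ℕ} {ι : Type*} [Fintype ι] [DecidableEq ι] [Nonempty (ι × Fin l)]

namespace BlockCode

omit [∀ j, Fintype (𝒴 j)] [∀ j, DecidableEq (𝒴 j)]

/-- The code of length `L` that applies `C` separately to each of the disjoint blocks
`t ↦ e (b, t)`. The reproduction letters outside these blocks are junk. -/
noncomputable def parallel (C : BlockCode J 𝒳 𝒴 Zt l) (e : ι × Fin l ↪ Fin L) :
    BlockCode J 𝒳 𝒴 Zt L where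
  M := Fintype.card (ι → Fin C.M)
  M_pos := Fintype.card_pos_iff.2 ⟨fun _ => ⟨0, C.M_pos⟩⟩
  enc x := Fintype.equivFin _ fun b => C.enc fun t => x (e (b, t))
  dec j m y i :=
    let (b, t) := Function.invFun e i
    C.dec j ((Fintype.equivFin (ι → Fin C.M)).symm m b) (fun u => y (e (b, u))) t

lemma parallel_M (C : BlockCode J 𝒳 𝒴 Zt l) (e : ι × Fin l ↪ Fin L) :
    (C.parallel e).M = C.M ^ Fintype.card ι := by
  simp [parallel]

lemma parallel_dec_enc (C : BlockCode J 𝒳 𝒴 Zt l) (e : ι × Fin l ↪ Fin L) (j : Fin J)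
    (x : Fin L → 𝒳) (y : Fin L → 𝒴 j) (b : ι) (t : Fin l) :
    (C.parallel e).dec j ((C.parallel e).enc x) y (e (b, t)) =
      C.dec j (C.enc fun u => x (e (b, u))) (fun u => y (e (b, u))) t := by
  simp [parallel, Function.leftInverse_invFun e.injective (b, t)]

lemma logb_parallel_phaseEmbedding_M_div_le {N : ℕ} [NeZero l] [NeZero N]
    (C : BlockCode J 𝒳 𝒴 Zt l) :
    Real.logb 2 (C.parallel (phaseEmbedding l N)).M / (l * (N * l + 1) : ℕ) ≤
      Real.logb 2 C.M / l := by
  have hl : (0 : ℝ) < l := by exact_mod_cast Nat.pos_of_neZero l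
  have hM : 0 ≤ Real.logb 2 C.M := Real.logb_nonneg one_lt_two (by exact_mod_cast C.M_pos)
  have hL : (0 : ℝ) < (l * (N * l + 1) : ℕ) := by exact_mod_cast Nat.pos_of_neZero _
  rw [parallel_M, Nat.cast_pow, Real.logb_pow, div_le_div_iff₀ hL hl]
  simp only [Fintype.card_prod, Fintype.card_fin, Nat.cast_mul, Nat.cast_add, Nat.cast_one]
  nlinarith [mul_nonneg hM hl.le]

end BlockCode

variable {W : 𝒳 → (∀ j, 𝒴 j) → (∀ j, 𝒵 j) → ℝ} {d1 : ∀ j, Zt j → 𝒵 j → ℝ} {dmax : Fin J → ℝ}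

section LetterDist

omit [∀ j, DecidableEq (𝒴 j)] [∀ j, DecidableEq (𝒵 j)]

/-- The expected distortion of the `t`-th letter of the reproduction at decoder `j`, given that
the source block is `x`. -/
noncomputable def letterDist (W : 𝒳 → (∀ j, 𝒴 j) → (∀ j, 𝒵 j) → ℝ) (d1 : ∀ j, Zt j → 𝒵 j → ℝ)
    (C : BlockCode J 𝒳 𝒴 Zt n) (j : Fin J) (x : Fin n → 𝒳) (t : Fin n) : ℝ :=
  ∑ p : Fin n → (∀ k, 𝒴 k) × (∀ k, 𝒵 k), (∏ i, W (x i) (p i).1 (p i).2) *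
    d1 j (C.dec j (C.enc x) (fun i => (p i).1 j) t) ((p t).2 j)

lemma letterDist_nonneg (hW0 : ∀ x y z, 0 ≤ W x y z) (hd0 : ∀ j a b, 0 ≤ d1 j a b)
    (C : BlockCode J 𝒳 𝒴 Zt n) (j : Fin J) (x : Fin n → 𝒳) (t : Fin n) :
    0 ≤ letterDist W d1 C j x t :=
  sum_nonneg fun _ _ => mul_nonneg (prod_nonneg fun _ _ => hW0 ..) (hd0 ..)

lemma letterDist_le (hW0 : ∀ x y z, 0 ≤ W x y z) (hW1 : ∀ x, ∑ y, ∑ z, W x y z = 1)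
    (hdmax : ∀ j a b, d1 j a b ≤ dmax j) (C : BlockCode J 𝒳 𝒴 Zt n) (j : Fin J)
    (x : Fin n → 𝒳) (t : Fin n) : letterDist W d1 C j x t ≤ dmax j := by
  have hsum : ∑ p : Fin n → (∀ k, 𝒴 k) × (∀ k, 𝒵 k), ∏ i, W (x i) (p i).1 (p i).2 = 1 := by
    rw [← Fintype.prod_sum fun i (p : (∀ k, 𝒴 k) × (∀ k, 𝒵 k)) => W (x i) p.1 p.2]
    exact prod_eq_one fun i _ => (Fintype.sum_prod_type _).trans (hW1 _)
  calc letterDist W d1 C j x t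
      ≤ ∑ p : Fin n → (∀ k, 𝒴 k) × (∀ k, 𝒵 k), (∏ i, W (x i) (p i).1 (p i).2) * dmax j :=
        sum_le_sum fun p _ =>
          mul_le_mul_of_nonneg_left (hdmax ..) (prod_nonneg fun _ _ => hW0 ..)
    _ = dmax j := by rw [← sum_mul, hsum, one_mul]

lemma letterDist_parallel (hW1 : ∀ x, ∑ y, ∑ z, W x y z = 1) (C : BlockCode J 𝒳 𝒴 Zt l)
    (e : ι × Fin l ↪ Fin L) (j : Fin J) (x : Fin L → 𝒳) (b : ι) (t : Fin l) :
    letterDist W d1 (C.parallel e) j x (e (b, t)) =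
      letterDist W d1 C j (fun u => x (e (b, u))) t := by
  simp only [letterDist, BlockCode.parallel_dec_enc]
  exact sum_prod_mul_comp_embedding (P := (∀ k, 𝒴 k) × (∀ k, 𝒵 k))
    ((Function.Embedding.sectR b _).trans e) (w := fun i p => W (x i) p.1 p.2)
    (fun i _ => (Fintype.sum_prod_type _).trans (hW1 (x i)))
    fun q => d1 j (C.dec j (C.enc fun u => x (e (b, u))) (fun u => (q u).1 j) t) ((q t).2 j)

end LetterDist

lemma sum_Wjn_mul (W : 𝒳 → (∀ j, 𝒴 j) → (∀ j, 𝒵 j) → ℝ) (j : Fin J) (x : Fin n → 𝒳)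
    (g : (Fin n → 𝒴 j) → (Fin n → 𝒵 j) → ℝ) :
    ∑ yj, ∑ zj, Wjn W j x yj zj * g yj zj =
      ∑ p : Fin n → (∀ k, 𝒴 k) × (∀ k, 𝒵 k),
        (∏ i, W (x i) (p i).1 (p i).2) * g (fun i => (p i).1 j) (fun i => (p i).2 j) := by
  have hWjn (v : (Fin n → 𝒴 j) × (Fin n → 𝒵 j)) : Wjn W j x v.1 v.2 =
      ∑ q : (Fin n → ∀ k, 𝒴 k) × (Fin n → ∀ k, 𝒵 k),
        if ((fun i => q.1 i j), (fun i => q.2 i j)) = v then Wn W x q.1 q.2 else 0 := by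
    simp only [Wjn, Fintype.sum_prod_type, Prod.ext_iff, funext_iff, forall_and]
  calc ∑ yj, ∑ zj, Wjn W j x yj zj * g yj zj
      = ∑ v : (Fin n → 𝒴 j) × (Fin n → 𝒵 j), Wjn W j x v.1 v.2 * g v.1 v.2 := by
        rw [Fintype.sum_prod_type]
    _ = ∑ q : (Fin n → ∀ k, 𝒴 k) × (Fin n → ∀ k, 𝒵 k),
          Wn W x q.1 q.2 * g (fun i => q.1 i j) (fun i => q.2 i j) := by
        simp only [hWjn, sum_mul, ite_mul, zero_mul]
        rw [sum_comm]
        simp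
    _ = ∑ p : Fin n → (∀ k, 𝒴 k) × (∀ k, 𝒵 k),
          (∏ i, W (x i) (p i).1 (p i).2) * g (fun i => (p i).1 j) (fun i => (p i).2 j) :=
        (Fintype.sum_equiv (Equiv.arrowProdEquivProdArrow _ _ _) _ _ fun _ => rfl).symm

lemma dbar_eq_sum_letterDist (C : BlockCode J 𝒳 𝒴 Zt n) (j : Fin J) (x : Fin n → 𝒳) :
    dbar W d1 C j x = (∑ t, letterDist W d1 C j x t) / n := by
  simp only [dbar, letterDist, sum_Wjn_mul W j x fun yj zj => dn d1 j (C.dec j (C.enc x) yj) zj]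
  rw [sum_comm, sum_div]
  simp only [dn, ← mul_sum, mul_div_assoc]

lemma dbar_nonneg (hW0 : ∀ x y z, 0 ≤ W x y z) (hd0 : ∀ j a b, 0 ≤ d1 j a b)
    (C : BlockCode J 𝒳 𝒴 Zt n) (j : Fin J) (x : Fin n → 𝒳) : 0 ≤ dbar W d1 C j x := by
  rw [dbar_eq_sum_letterDist]
  exact div_nonneg (sum_nonneg fun t _ => letterDist_nonneg hW0 hd0 C j x t) n.cast_nonneg

lemma dbar_parallel_le (hW0 : ∀ x y z, 0 ≤ W x y z) (hW1 : ∀ x, ∑ y, ∑ z, W x y z = 1)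
    (hdmax : ∀ j a b, d1 j a b ≤ dmax j) (C : BlockCode J 𝒳 𝒴 Zt l)
    (e : ι × Fin l ↪ Fin L) (j : Fin J) (x : Fin L → 𝒳) :
    dbar W d1 (C.parallel e) j x ≤
      (l * ∑ b, dbar W d1 C j (fun t => x (e (b, t))) + (L - Fintype.card ι * l) * dmax j) / L := by
  have hl : l ≠ 0 := (Fin.pos (Classical.arbitrary (ι × Fin l)).2).ne'
  have hcoded : ∑ i ∈ univ.map e, letterDist W d1 (C.parallel e) j x i =
      l * ∑ b, dbar W d1 C j (fun t => x (e (b, t))) := by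
    simp only [sum_map, univ_product_univ.symm, sum_product, letterDist_parallel hW1, mul_sum,
      dbar_eq_sum_letterDist, mul_div_cancel₀ _ (Nat.cast_ne_zero (R := ℝ).2 hl)]
  have hspare : ∑ i ∈ (univ.map e)ᶜ, letterDist W d1 (C.parallel e) j x i ≤
      (L - Fintype.card ι * l) * dmax j := by
    have hcard : (((univ.map e)ᶜ).card : ℝ) = L - Fintype.card ι * l := by
      rw [card_compl, Nat.cast_sub (card_le_univ _)]
      simp
    rw [← hcard, ← nsmul_eq_mul]
    exact sum_le_card_nsmul _ _ _ fun i _ => letterDist_le hW0 hW1 hdmax _ j x i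
  rw [dbar_eq_sum_letterDist, ← sum_add_sum_compl (univ.map e), hcoded]
  gcongr

end Code

section Shift

variable {α : Type*}

/-- The left shift on one-sided sequences. -/
def shift (ω : ℕ → α) : ℕ → α := fun k => ω (k + 1)

/-- The block `x^n` of the first `n` letters of the sequence `ω`. -/
def initialBlock (n : ℕ) (ω : ℕ → α) : Fin n → α := fun i => ω i

lemma shift_iterate_apply (m : ℕ) (ω : ℕ → α) (k : ℕ) : shift^[m] ω k = ω (m + k) := by
  induction m generalizing ω with
  | zero => simp
  | succ m ih =>
    rw [Function.iterate_succ_apply, ih, shift]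
    exact congrArg ω (by ring)

lemma initialBlock_phaseEmbedding {l N : ℕ} (ω : ℕ → α) (p : Fin l × Fin N) :
    (fun t => initialBlock _ ω (phaseEmbedding l N (p, t))) =
      initialBlock l (shift^[phaseOffset l N p] ω) := by
  funext t
  rw [initialBlock, initialBlock, phaseEmbedding_apply_val, shift_iterate_apply]

end Shift

section Empirical

lemma sum_qEmp_mul {n : ℕ} (l s : ℕ) (x : Fin n → 𝒳) (φ : (Fin l → 𝒳) → ℝ) :
    ∑ a, qEmp l s x a * φ a =
      (((n - s) / l : ℕ) : ℝ)⁻¹ * ∑ i ∈ range ((n - s) / l), φ (subblock x (i * l + s) l) := by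
  simp only [qEmp, card_filter, Nat.cast_sum, div_eq_inv_mul, mul_assoc, ← mul_sum, sum_mul]
  rw [sum_comm]
  simp

lemma sum_qEmp_initialBlock_mul (n l s : ℕ) (ω : ℕ → 𝒳) (φ : (Fin l → 𝒳) → ℝ) :
    ∑ a, qEmp l s (initialBlock n ω) a * φ a =
      birkhoffAverage ℝ shift^[l] (fun ω => φ (initialBlock l ω)) ((n - s) / l) (shift^[s] ω) := by
  rw [sum_qEmp_mul, birkhoffAverage, birkhoffSum, smul_eq_mul]
  refine congrArg _ (sum_congr rfl fun i hi => congrArg φ (funext fun t => ?_))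
  have hle : (i + 1) * l ≤ n - s := (Nat.mul_le_mul_right l (mem_range.1 hi)).trans
    (Nat.div_mul_le_self _ _)
  have hlt : i * l + s + t < n := by
    have := t.2
    rw [add_one_mul] at hle
    lia
  rw [subblock, dif_pos hlt, initialBlock, initialBlock, ← Function.iterate_mul,
    shift_iterate_apply, shift_iterate_apply]
  congr 1
  ring

end Empirical

section Source

omit [∀ j, Fintype (Zt j)]

open Filter Topology
open scoped ENNReal

lemma exists_memLp_ge_comp {Ω α : Type*} [MeasurableSpace Ω] [Fintype α] (μ : Measure Ω)
    [IsFiniteMeasure μ] (π : Ω → α) {g : α → ℝ} (hg : ∀ a, 0 ≤ g a) (p : ℝ≥0∞) :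
    ∃ f : Ω → ℝ, MemLp f p μ ∧ (∀ ω, g (π ω) ≤ f ω) ∧
      ∫ ω, f ω ∂μ = ∑ a, μ.real (π ⁻¹' {a}) * g a := by
  -- The fibres of `π` need not be measurable, hence their measurable hulls.
  have hmeas (a : α) : MeasurableSet (toMeasurable μ (π ⁻¹' {a})) := measurableSet_toMeasurable ..
  refine ⟨fun ω => ∑ a, (toMeasurable μ (π ⁻¹' {a})).indicator (fun _ => g a) ω,
    memLp_finsetSum _ fun a _ => (memLp_const (g a)).indicator (hmeas a), fun ω => ?_, ?_⟩
  · calc g (π ω) = (toMeasurable μ (π ⁻¹' {π ω})).indicator (fun _ => g (π ω)) ω :=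
          (Set.indicator_of_mem (subset_toMeasurable μ (π ⁻¹' {π ω}) rfl) fun _ => g (π ω)).symm
      _ ≤ _ := single_le_sum (f := fun a => (toMeasurable μ (π ⁻¹' {a})).indicator (fun _ => g a) ω)
          (fun a _ => Set.indicator_nonneg (fun _ _ => hg a) ω) (mem_univ _)
  · rw [integral_finsetSum _ fun a _ => (integrable_const (g a)).indicator (hmeas a)]
    simp [integral_indicator_const _ (hmeas _), measureReal_def, measure_toMeasurable]

section Phase

omit [Fintype 𝒳] [DecidableEq 𝒳] [Nonempty 𝒳]

variable {W : 𝒳 → (∀ j, 𝒴 j) → (∀ j, 𝒵 j) → ℝ} {d1 : ∀ j, Zt j → 𝒵 j → ℝ} {dmax : Fin J → ℝ}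
  {l N : ℕ} [NeZero l] [NeZero N]

lemma dbar_parallel_phaseEmbedding_le (hW0 : ∀ x y z, 0 ≤ W x y z)
    (hW1 : ∀ x, ∑ y, ∑ z, W x y z = 1) (hd0 : ∀ j a b, 0 ≤ d1 j a b)
    (hdmax : ∀ j a b, d1 j a b ≤ dmax j) (C : BlockCode J 𝒳 𝒴 Zt l) (j : Fin J) (ω : ℕ → 𝒳) :
    dbar W d1 (C.parallel (phaseEmbedding l N)) j (initialBlock _ ω) ≤
      phaseAverage l N (fun m => dbar W d1 C j (initialBlock l (shift^[m] ω))) +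
        dmax j / (N * l + 1) := by
  have hl : (0 : ℝ) < l := by exact_mod_cast Nat.pos_of_neZero l
  have hN : (0 : ℝ) < N := by exact_mod_cast Nat.pos_of_neZero N
  set A := ∑ p, dbar W d1 C j (initialBlock l (shift^[phaseOffset l N p] ω))
  have hA : 0 ≤ A := sum_nonneg fun p _ => dbar_nonneg hW0 hd0 C j _
  calc dbar W d1 (C.parallel (phaseEmbedding l N)) j (initialBlock _ ω)
      ≤ (l * A + ((l * (N * l + 1) : ℕ) - (Fintype.card (Fin l × Fin N) * l : ℝ)) * dmax j) /
          (l * (N * l + 1) : ℕ) := by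
        simpa only [initialBlock_phaseEmbedding] using
          dbar_parallel_le hW0 hW1 hdmax C (phaseEmbedding l N) j (initialBlock _ ω)
    _ = A / (N * l + 1) + dmax j / (N * l + 1) := by
        simp only [Fintype.card_prod, Fintype.card_fin]
        push_cast
        field_simp
        ring
    _ ≤ A / (l * N) + dmax j / (N * l + 1) := by
        gcongr
        linarith [mul_comm (l : ℝ) N]
    _ = _ := by
        rw [phaseAverage, smul_eq_mul, div_eq_inv_mul, Nat.cast_mul]

end Phase

variable [MeasurableSpace 𝒳] {μ : Measure (ℕ → 𝒳)} {W : 𝒳 → (∀ j, 𝒴 j) → (∀ j, 𝒵 j) → ℝ}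
  {d1 : ∀ j, Zt j → 𝒵 j → ℝ} {dmax : Fin J → ℝ} {l : ℕ}

omit [DecidableEq 𝒳] [Nonempty 𝒳] in
lemma exists_memLp_dbar_le_integral_eq_expDist [IsFiniteMeasure μ] (hW0 : ∀ x y z, 0 ≤ W x y z)
    (hd0 : ∀ j a b, 0 ≤ d1 j a b) (C : BlockCode J 𝒳 𝒴 Zt l) (j : Fin J) :
    ∃ f : (ℕ → 𝒳) → ℝ, MemLp f 2 μ ∧ (∀ ω, dbar W d1 C j (initialBlock l ω) ≤ f ω) ∧
      ∫ ω, f ω ∂μ = expDist μ W d1 C j := by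
  obtain ⟨f, hf, hle, hint⟩ := exists_memLp_ge_comp μ (initialBlock l) (dbar_nonneg hW0 hd0 C j) 2
  refine ⟨f, hf, hle, hint.trans (sum_congr rfl fun x _ => ?_)⟩
  congr 3
  exact Set.ext fun ω => funext_iff

variable [IsProbabilityMeasure μ] [NeZero l]

lemma eventually_measure_expDist_add_le_sum_qEmp_parallel_le (hW0 : ∀ x y z, 0 ≤ W x y z)
    (hW1 : ∀ x, ∑ y, ∑ z, W x y z = 1) (hd0 : ∀ j a b, 0 ≤ d1 j a b)
    (hdmax : ∀ j a b, d1 j a b ≤ dmax j) (herg : Ergodic shift μ) (C : BlockCode J 𝒳 𝒴 Zt l)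
    (j : Fin J) {η : ℝ} (hη : 0 < η) {δ : ℝ≥0∞} (hδ : δ ≠ 0) :
    ∀ᶠ N in atTop, ∀ [NeZero N], ∀ n ≥ l * (N * l + 1),
      μ {ω | expDist μ W d1 C j + η ≤ ∑ a, qEmp (l * (N * l + 1)) 0 (initialBlock n ω) a *
        dbar W d1 (C.parallel (phaseEmbedding l N)) j a} ≤ δ := by
  obtain ⟨f, hf, hle, hint⟩ := exists_memLp_dbar_le_integral_eq_expDist hW0 hd0 C j (μ := μ)
  have hwaste : Tendsto (fun N : ℕ => dmax j / (N * l + 1 : ℝ)) atTop (𝓝 0) := by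
    refine tendsto_const_nhds.div_atTop (tendsto_atTop_add_const_right _ _ ?_)
    exact tendsto_natCast_atTop_atTop.atTop_mul_const (by exact_mod_cast Nat.pos_of_neZero l)
  filter_upwards [eventually_measure_integral_add_le_birkhoffAverage_phaseAverage_le herg hf
      (NeZero.ne l) (half_pos hη) hδ, hwaste.eventually_le_const (half_pos hη)]
    with N hN hDN _ n hn
  have hblock (ω : ℕ → 𝒳) : dbar W d1 (C.parallel (phaseEmbedding l N)) j (initialBlock _ ω) ≤
      phaseAverage l N (fun m => f (shift^[m] ω)) + η / 2 := by
    refine (dbar_parallel_phaseEmbedding_le hW0 hW1 hd0 hdmax C j ω).trans (add_le_add ?_ hDN)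
    exact mul_le_mul_of_nonneg_left (sum_le_sum fun p _ => hle _) (by positivity)
  have hL : 0 < l * (N * l + 1) := Nat.pos_of_neZero _
  have hk : (n - 0) / (l * (N * l + 1)) ≠ 0 := (Nat.div_pos hn hL).ne'
  refine (measure_mono fun ω (hω : expDist μ W d1 C j + η ≤ _) => ?_).trans
    (hN _ (herg.toMeasurePreserving.iterate (l * (N * l + 1))) _ hk)
  rw [sum_qEmp_initialBlock_mul, Function.iterate_zero_apply] at hω
  change ∫ ω, f ω ∂μ + η / 2 ≤ _
  linarith [birkhoffAverage_le_add_const shift^[l * (N * l + 1)] hblock hk ω]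

theorem exists_blockCode_measure_expDist_add_le_sum_qEmp_le (hW0 : ∀ x y z, 0 ≤ W x y z)
    (hW1 : ∀ x, ∑ y, ∑ z, W x y z = 1) (hd0 : ∀ j a b, 0 ≤ d1 j a b)
    (hdmax : ∀ j a b, d1 j a b ≤ dmax j) (herg : Ergodic shift μ) (C : BlockCode J 𝒳 𝒴 Zt l)
    {η : ℝ} (hη : 0 < η) {δ : ℝ≥0∞} (hδ : δ ≠ 0) :
    ∃ L ≠ 0, ∃ C' : BlockCode J 𝒳 𝒴 Zt L,
      Real.logb 2 C'.M / L ≤ Real.logb 2 C.M / l ∧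
      ∀ n ≥ L, μ {ω | ∃ j, expDist μ W d1 C j + η ≤
        ∑ a, qEmp L 0 (initialBlock n ω) a * dbar W d1 C' j a} ≤ δ := by
  have hδJ : δ / J ≠ 0 := ENNReal.div_ne_zero.2 ⟨hδ, ENNReal.natCast_ne_top J⟩
  obtain ⟨N, hN, hN0⟩ := ((eventually_all.2 fun j =>
    eventually_measure_expDist_add_le_sum_qEmp_parallel_le hW0 hW1 hd0 hdmax herg C j hη hδJ).and
      (eventually_ne_atTop 0)).exists
  have : NeZero N := ⟨hN0⟩
  refine ⟨l * (N * l + 1), NeZero.ne _, C.parallel (phaseEmbedding l N),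
    C.logb_parallel_phaseEmbedding_M_div_le, fun n hn => ?_⟩
  rw [Set.ofPred_exists]
  calc μ (⋃ _, _) ≤ ∑ _ : Fin J, δ / J :=
        (measure_iUnion_fintype_le μ _).trans (sum_le_sum fun j _ => hN j n hn)
    _ = J * (δ / J) := by simp
    _ ≤ δ := ENNReal.mul_div_le

end Source

section Growth

open Filter

lemma eventually_le_logb_logb (c : ℝ) : ∀ᶠ n : ℕ in atTop, c ≤ Real.logb 2 (Real.logb 2 n) :=
  ((Real.tendsto_logb_atTop one_lt_two).comp
    ((Real.tendsto_logb_atTop one_lt_two).comp tendsto_natCast_atTop_atTop)).eventually_ge_atTop c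

end Growth

omit [∀ j, Fintype (Zt j)] in
lemma mem_goodSet_of_sum_qEmp_le {W : 𝒳 → (∀ j, 𝒴 j) → (∀ j, 𝒵 j) → ℝ}
    {d1 : ∀ j, Zt j → 𝒵 j → ℝ} {R ε : ℝ} {Δ D : Fin J → ℝ} (hε : 0 ≤ ε)
    (hD : ∀ j, D j ≤ Δ j + ε) {L n : ℕ} (hL : L ≠ 0)
    (hLn : L ≤ Real.logb 2 (Real.logb 2 n)) (C : BlockCode J 𝒳 𝒴 Zt L)
    (hR : Real.logb 2 C.M / L ≤ R + ε) {x : Fin n → 𝒳}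
    (hx : ∀ j, ∑ a, qEmp L 0 x a * dbar W d1 C j a ≤ D j + ε) :
    x ∈ GoodSet (𝒴 := 𝒴) W d1 R Δ ε n := by
  have hL0 : 0 < L := Nat.pos_of_ne_zero hL
  have hM : (C.M : ℝ) ≤ 2 ^ (L * (R + ε)) := by
    rwa [← Real.logb_le_iff_le_rpow one_lt_two (by exact_mod_cast C.M_pos),
      ← div_le_iff₀' (by exact_mod_cast hL0)]
  refine ⟨L, hL0, hLn, C, hM, 0, hL0, fun j => ?_⟩
  have hJ : (1 : ℝ) ≤ J := by exact_mod_cast j.pos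
  nlinarith [hx j, hD j, mul_le_mul_of_nonneg_right hJ hε]

omit [∀ j, Fintype (Zt j)] in
theorem prob_bad_set_small_general [MeasurableSpace 𝒳] {W : 𝒳 → (∀ j, 𝒴 j) → (∀ j, 𝒵 j) → ℝ}
    (hW0 : ∀ x y z, 0 ≤ W x y z) (hW1 : ∀ x, ∑ y, ∑ z, W x y z = 1)
    {d1 : ∀ j, Zt j → 𝒵 j → ℝ} {dmax : Fin J → ℝ} (hd0 : ∀ j a b, 0 ≤ d1 j a b)
    (hdmax : ∀ j a b, d1 j a b ≤ dmax j) {R ε : ℝ} {Δ : Fin J → ℝ} (hε : 0 < ε)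
    {μ : Measure (ℕ → 𝒳)} [IsProbabilityMeasure μ] (herg : Ergodic shift μ) {l : ℕ} [NeZero l]
    (C : BlockCode J 𝒳 𝒴 Zt l) (hR : Real.logb 2 C.M / l ≤ R + ε)
    (hD : ∀ j, expDist μ W d1 C j ≤ Δ j + ε) :
    ∃ N : ℕ, ∀ n ≥ N,
      (μ {ω | initialBlock n ω ∉ GoodSet (𝒴 := 𝒴) W d1 R Δ ε n}).toReal ≤ ε := by
  obtain ⟨L, hL, C', hR', hbad⟩ := exists_blockCode_measure_expDist_add_le_sum_qEmp_le
    hW0 hW1 hd0 hdmax herg C hε (ENNReal.ofReal_pos.2 hε).ne'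
  obtain ⟨N, hN⟩ := Filter.eventually_atTop.1 (eventually_le_logb_logb L)
  refine ⟨max N L, fun n hn => ENNReal.toReal_le_of_le_ofReal hε.le ?_⟩
  refine (measure_mono fun ω hω => ?_).trans (hbad n (le_of_max_le_right hn))
  by_contra hgood
  exact hω (mem_goodSet_of_sum_qEmp_le hε.le hD hL (hN n (le_of_max_le_left hn)) C'
    (hR'.trans hR) fun j => (not_le.1 fun hj => hgood ⟨j, hj⟩).le)

/-- **Lemma 1.** If `(R, Δ)` is achievable for the stationary ergodic source `μ`, then for all
sufficiently large `n` the probability `P_{X^n}(𝒢_n^∁)` is at most `ε`. -/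
theorem prob_bad_set_small
    [MeasurableSpace 𝒳]
    (W : 𝒳 → (∀ j, 𝒴 j) → (∀ j, 𝒵 j) → ℝ)
    (hW0 : ∀ x y z, 0 ≤ W x y z)
    (hW1 : ∀ x, (∑ y, ∑ z, W x y z) = 1)
    (d1 : ∀ j, Zt j → 𝒵 j → ℝ) (dmax : Fin J → ℝ)
    (hd0 : ∀ j a b, 0 ≤ d1 j a b) (hdmax : ∀ j a b, d1 j a b ≤ dmax j)
    (R : ℝ) (Δ : Fin J → ℝ) (ε : ℝ) (hε : 0 < ε)
    (μ : Measure (ℕ → 𝒳)) (hprob : IsProbabilityMeasure μ)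
    (herg : Ergodic (fun ω k => ω (k + 1)) μ)
    (hach : Achievable μ W d1 R Δ) :
    ∃ N : ℕ, ∀ n ≥ N,
      (μ {ω | (fun i : Fin n => ω (i : ℕ)) ∉
          GoodSet (𝒴 := 𝒴) W d1 R Δ ε n}).toReal ≤ ε := by
  obtain ⟨l, hl⟩ := hach ε hε
  obtain ⟨C, hR, hD⟩ := hl (l + 1) l.le_succ
  exact prob_bad_set_small_general hW0 hW1 hd0 hdmax hε herg C hR hD

end Lemma1
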